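/- arXiv:2508.09082 — 2 statements merged into one kernel-verified Lean document; each statement's English description precedes it below -/
import Mathlib

section
/- Let n be a positive integer, R = 𝔽₂[x]/(xⁿ−1), let a, m ∈ R and set b = m·a in R. Assume that the polynomial gcd of the degree-<n representatives of a and b together with xⁿ−1 has degree at least 1 (equivalently, the GB code of (a,b) has positive dimension). Then (1, m) ∈ C₁(a,b) \ C₂(a,b); consequently d_GB(a,b) ≤ wt(m) + 1. -/
open Polynomial

noncomputable section

/-- `R2 n` is the ring `𝔽₂[x]/(xⁿ − 1)`. -/
abbrev R2 (n : ℕ) : Type := AdjoinRoot (X ^ n - 1 : (ZMod 2)[X])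

/-- The image of `x` in `𝔽₂[x]/(xⁿ − 1)`. -/
def xR (n : ℕ) : R2 n := AdjoinRoot.root _

/-- The quotient map `𝔽₂[x] → 𝔽₂[x]/(xⁿ − 1)`. -/
def mkR (n : ℕ) : (ZMod 2)[X] →+* R2 n := AdjoinRoot.mk _

lemma xR_pow_n (n : ℕ) : xR n ^ n = 1 := by
  have h : (AdjoinRoot.mk (X ^ n - 1 : (ZMod 2)[X])) (X ^ n - 1) = 0 := AdjoinRoot.mk_self
  rw [map_sub, map_pow, AdjoinRoot.mk_X, map_one, sub_eq_zero] at h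
  exact h

/-- The unique representative of degree `< n` of an element of `𝔽₂[x]/(xⁿ − 1)` (junk if `n = 0`). -/
def repP {n : ℕ} (u : R2 n) : (ZMod 2)[X] :=
  if h : n = 0 then 0
  else AdjoinRoot.modByMonicHom (by simpa using monic_X_pow_sub_C (1 : ZMod 2) h) u

/-- The Hamming weight of an element of `𝔽₂[x]/(xⁿ − 1)`: the number of nonzero coefficients
of its degree-`< n` representative. -/
def wt {n : ℕ} (u : R2 n) : ℕ := (repP u).support.card

/-- Coefficient of the degree-`< n` representative, indexed by `ℤ/n`. -/
def coeffZ {n : ℕ} (u : R2 n) (i : ZMod n) : ZMod 2 := (repP u).coeff i.val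

/-- The X-stabilizer space `C₂(a,b) = {(r·a, r·b) : r ∈ R}` of the GB code of `(a,b)`. -/
def C2set (n : ℕ) (a b : R2 n) : Set (R2 n × R2 n) := {p | ∃ r : R2 n, p = (r * a, r * b)}

/-- The space `C₁(a,b) = {(u,v) : u·b + v·a = 0}` of the GB code of `(a,b)`. -/
def C1set (n : ℕ) (a b : R2 n) : Set (R2 n × R2 n) := {p | p.1 * b + p.2 * a = 0}

/-- The (X-side) minimum distance of the GB code of `(a,b)`. -/
def dGB (n : ℕ) (a b : R2 n) : ℕ :=
  sInf {k | ∃ p ∈ C1set n a b \ C2set n a b, wt p.1 + wt p.2 = k}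

/-- `P_m(x) = 1 + x + ⋯ + x^{m−1}` as a polynomial over `𝔽₂`. -/
def PmP (m : ℕ) : (ZMod 2)[X] := ∑ i ∈ Finset.range m, X ^ i

/-- `P_m(x) = 1 + x + ⋯ + x^{m−1}` as an element of `𝔽₂[x]/(xⁿ − 1)`. -/
def PmR (n m : ℕ) : R2 n := ∑ i ∈ Finset.range m, xR n ^ i

/-- The ring endomorphism of `𝔽₂[x]/(xⁿ − 1)` induced by `x ↦ x^d`. -/
def substHom (n d : ℕ) : R2 n →+* R2 n :=
  AdjoinRoot.lift (algebraMap (ZMod 2) (R2 n)) (xR n ^ d) (by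
    simp only [eval₂_sub, eval₂_X_pow, eval₂_one]
    rw [← pow_mul, mul_comm d n, pow_mul, xR_pow_n, one_pow, sub_self])

/-- The Euclidean inner product on `𝔽₂²ⁿ`, in terms of pairs `(u₁, u₂)` of elements of
`𝔽₂[x]/(xⁿ − 1)` (representing the concatenated binary vector `(u₁ | u₂)`). -/
def eucInner (n : ℕ) (p q : R2 n × R2 n) : ZMod 2 :=
  ∑ i ∈ Finset.range n,
    ((repP p.1).coeff i * (repP q.1).coeff i + (repP p.2).coeff i * (repP q.2).coeff i)

/-- The symplectic inner product of `u₁ + w·u₂` and `v₁ + w·v₂`, i.e.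
`Σᵢ (u₁ᵢ·v₂ᵢ + u₂ᵢ·v₁ᵢ)`, in terms of the pairs `(u₁,u₂)`, `(v₁,v₂)`. -/
def sympInner (n : ℕ) (p q : R2 n × R2 n) : ZMod 2 :=
  ∑ i ∈ Finset.range n,
    ((repP p.1).coeff i * (repP q.2).coeff i + (repP p.2).coeff i * (repP q.1).coeff i)

/-- Euclidean dual of a set of (pairs representing) binary vectors of length `2n`. -/
def eucDual (n : ℕ) (S : Set (R2 n × R2 n)) : Set (R2 n × R2 n) :=
  {p | ∀ q ∈ S, eucInner n q p = 0}

/-- Symplectic dual of a set of (pairs representing) vectors of `𝔽₄ⁿ`. -/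
def sympDual (n : ℕ) (S : Set (R2 n × R2 n)) : Set (R2 n × R2 n) :=
  {p | ∀ q ∈ S, sympInner n q p = 0}

/-- Number of nonzero `𝔽₄`-coordinates of `u₁ + w·u₂`, in terms of the pair `(u₁,u₂)`. -/
def wt4 (n : ℕ) (p : R2 n × R2 n) : ℕ := ((repP p.1).support ∪ (repP p.2).support).card

/-- The `2n` binary coordinates of a pair `(u₁,u₂)`. -/
def coords {n : ℕ} (p : R2 n × R2 n) : (Fin n ⊕ Fin n) → ZMod 2 :=
  Sum.elim (fun i => (repP p.1).coeff i) (fun i => (repP p.2).coeff i)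

/-- Vertex set of the Tanner graph: check vertices `x_t` (left) and data vertices
`q_s`, `q'_s` (right). -/
def TV (n : ℕ) : Type := (ZMod n) ⊕ ((ZMod n) ⊕ (ZMod n))

/-- `trel a b v w` holds iff `v` is a check vertex `x_t`, `w` is a data vertex, and they are
connected: `x_t ~ q_s` iff `a_{s−t} = 1`, and `x_t ~ q'_s` iff `b_{s−t} = 1`. -/
def trel {n : ℕ} (a b : R2 n) (v w : TV n) : Prop :=
  ∃ t s : ZMod n, v = Sum.inl t ∧
    ((w = Sum.inr (Sum.inl s) ∧ coeffZ a (s - t) = 1) ∨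
     (w = Sum.inr (Sum.inr s) ∧ coeffZ b (s - t) = 1))

/-- The Tanner graph `T(a,b)` of the GB code of `(a,b)`. -/
def tanner (n : ℕ) (a b : R2 n) : SimpleGraph (TV n) where
  Adj v w := trel a b v w ∨ trel a b w v
  symm := ⟨fun v w h => Or.symm h⟩
  loopless := by
    constructor
    rintro v (⟨t, s, hv, hw⟩ | ⟨t, s, hv, hw⟩) <;>
      rcases hw with ⟨hw, -⟩ | ⟨hw, -⟩ <;> (subst hv; simp at hw)

end

/-!
In characteristic two `1 · (m a) + m · a = 0`, so `(1, m) ∈ C₁(a, m a)` always. On the other hand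
`(1, m) = (r a, r m a)` forces `r a = 1`, so `(1, m)` is a stabilizer exactly when `a` is a unit of
`𝔽₂[x]/(xⁿ − 1)`, that is, when its representative is coprime to `xⁿ − 1`;
a common divisor of positive degree excludes this.
-/

noncomputable section

lemma monic_X_pow_sub_one {R : Type*} [Ring R] {n : ℕ} (hn : n ≠ 0) :
    (X ^ n - 1 : R[X]).Monic := by
  simpa using monic_X_pow_sub_C (1 : R) hn

lemma isUnit_adjoinRoot_mk_iff_isCoprime {R : Type*} [CommRing R] {f g : R[X]} :
    IsUnit (AdjoinRoot.mk f g) ↔ IsCoprime g f := by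
  rw [isUnit_iff_exists_inv', AdjoinRoot.mk_surjective.exists]
  simp only [← map_mul, ← map_one (AdjoinRoot.mk f), AdjoinRoot.mk_eq_mk]
  constructor
  · rintro ⟨u, v, huv⟩
    exact ⟨u, -v, by linear_combination huv⟩
  · rintro ⟨u, v, huv⟩
    exact ⟨u, -v, by linear_combination huv⟩

section

variable {n : ℕ}

lemma mkR_repP (hn : n ≠ 0) (u : R2 n) : mkR n (repP u) = u := by
  rw [repP, dif_neg hn]
  exact AdjoinRoot.mk_leftInverse (monic_X_pow_sub_one hn) u

lemma repP_mkR_of_degree_lt (hn : n ≠ 0) {p : (ZMod 2)[X]} (hp : p.degree < n) :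
    repP (mkR n p) = p := by
  have hdeg : (X ^ n - 1 : (ZMod 2)[X]).degree = n := by
    simpa using degree_X_pow_sub_C (Nat.pos_of_ne_zero hn) (1 : ZMod 2)
  rw [repP, dif_neg hn, mkR, AdjoinRoot.modByMonicHom_mk]
  exact (modByMonic_eq_self_iff (monic_X_pow_sub_one hn)).2 (hdeg ▸ hp)

lemma wt_one (hn : n ≠ 0) : wt (1 : R2 n) = 1 := by
  have hdeg : (1 : (ZMod 2)[X]).degree < n := by
    rw [degree_one]
    exact_mod_cast Nat.pos_of_ne_zero hn
  rw [wt, ← map_one (mkR n), repP_mkR_of_degree_lt hn hdeg, ← C_1, support_C one_ne_zero,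
    Finset.card_singleton]

lemma isUnit_iff_isCoprime_repP (hn : n ≠ 0) {u : R2 n} :
    IsUnit u ↔ IsCoprime (repP u) (X ^ n - 1) := by
  rw [← isUnit_adjoinRoot_mk_iff_isCoprime, ← mkR, mkR_repP hn]

lemma one_pair_mem_C1set (a m : R2 n) : (1, m) ∈ C1set n a (m * a) := by
  change 1 * (m * a) + m * a = 0
  rw [one_mul, ZModModule.add_self]

lemma one_pair_mem_C2set_iff_isUnit {a m : R2 n} : (1, m) ∈ C2set n a (m * a) ↔ IsUnit a := by
  constructor
  · rintro ⟨r, hr⟩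
    exact .of_mul_eq_one_right r (congrArg Prod.fst hr).symm
  · intro ha
    obtain ⟨r, hr⟩ := ha.exists_left_inv
    exact ⟨r, by rw [mul_left_comm, hr, mul_one]⟩

lemma dGB_le_of_mem {a b : R2 n} {p : R2 n × R2 n} (hp : p ∈ C1set n a b \ C2set n a b) :
    dGB n a b ≤ wt p.1 + wt p.2 :=
  Nat.sInf_le ⟨p, hp, rfl⟩

end

/-- Let `a, m ∈ R = 𝔽₂[x]/(xⁿ−1)` and `b = m·a`.  If the polynomial gcd of
the degree-`< n` representatives of `a` and `b` together with `xⁿ−1` has degree at least `1`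
(equivalently the GB code of `(a,b)` has positive dimension), then
`(1, m) ∈ C₁(a,b) \ C₂(a,b)`; consequently `d_GB(a,b) ≤ wt(m) + 1`. -/
theorem stmt_2 (n : ℕ) (hn : 0 < n) (a m b : R2 n) (hb : b = m * a)
    (hdim : 1 ≤ (EuclideanDomain.gcd (EuclideanDomain.gcd (repP a) (repP b))
      (X ^ n - 1 : (ZMod 2)[X])).natDegree) :
    ((1 : R2 n), m) ∈ C1set n a b \ C2set n a b ∧ dGB n a b ≤ wt m + 1 := by
  subst hb
  have ha : ¬ IsUnit a := fun hunit ↦ not_isUnit_of_natDegree_pos _ hdim <|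
    ((isUnit_iff_isCoprime_repP hn.ne').1 hunit).isUnit_of_dvd'
      ((EuclideanDomain.gcd_dvd_left _ _).trans (EuclideanDomain.gcd_dvd_left _ _))
      (EuclideanDomain.gcd_dvd_right _ _)
  have hmem : ((1 : R2 n), m) ∈ C1set n a (m * a) \ C2set n a (m * a) :=
    ⟨one_pair_mem_C1set a m, fun h ↦ ha (one_pair_mem_C2set_iff_isUnit.1 h)⟩
  refine ⟨hmem, ?_⟩
  calc dGB n a (m * a) ≤ wt (1 : R2 n) + wt m := dGB_le_of_mem hmem
    _ = wt m + 1 := by rw [wt_one hn.ne', add_comm]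

end
end

section
/- Let d be a positive odd integer and n = (d²+1)/2. (1) In R = 𝔽₂[x]/(xⁿ−1) one has P_d(x) · (x·P_d(x^d)) = 1, where P_d(x^d) = Σ_{i=0}^{d−1} x^{d·i}; the same identity P_d(x) · (x·P_d(x^d)) ≡ 1 holds modulo P_n(x), i.e., in 𝔽₂[x]/(P_n(x)); moreover the element x·P_d(x^d) of R has weight exactly d. (2) In 𝔽₂[x] one has the exact polynomial identity P_n(x) = P_d(x)·(1 + x^d + x^{2d} + ⋯ + x^{d·((d−1)/2 − 1)}) + (x^{d(d−1)/2} + x^{d(d−1)/2 + 1} + ⋯ + x^{n−1}). -/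
open Polynomial

noncomputable section

/-!
Cutting `0, …, ab - 1` into `b` blocks of length `a` gives `P_a(x) * P_b(x^a) = P_{ab}(x)`. When
`2n = ab + 1`, shifting by `x` and adding the constant term turns this into
`P_a(x) * (x * P_b(x^a)) + 1 = P_{2n}(x) = P_n(x) * (x^n + 1)`. In characteristic two, this says
that `P_a(x)` and `x * P_b(x^a)` are inverse to each other modulo every divisor of
`P_n(x) * (x^n - 1)`. Moreover `2n = ab + 1` makes `a` coprime to `n`, so the `b ≤ n` exponents
`ai + 1` stay distinct modulo `n` and no two monomials collide on reduction modulo `x^n - 1`.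
-/

section GeomSum

variable {A : Type*}

lemma geom_sum_mul_geom_sum_pow [Semiring A] (x : A) (a b : ℕ) :
    (∑ i ∈ Finset.range a, x ^ i) * ∑ i ∈ Finset.range b, x ^ (a * i) =
      ∑ i ∈ Finset.range (a * b), x ^ i := by
  induction b with
  | zero => simp
  | succ b ih =>
    rw [Finset.sum_range_succ, mul_add, ih, Nat.mul_succ, Finset.sum_range_add, Finset.sum_mul]
    simp only [← pow_add, add_comm]

lemma geom_sum_eq_mul_geom_sum_pow_add_sum_Ico [Semiring A] (x : A) {a k n : ℕ}
    (hk : a * k ≤ n) :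
    ∑ i ∈ Finset.range n, x ^ i =
      (∑ i ∈ Finset.range a, x ^ i) * ∑ i ∈ Finset.range k, x ^ (a * i) +
        ∑ i ∈ Finset.Ico (a * k) n, x ^ i := by
  rw [geom_sum_mul_geom_sum_pow, Finset.sum_range_add_sum_Ico _ hk]

lemma geom_sum_mul_mul_geom_sum_pow_add_one [CommSemiring A] (x : A) {a b n : ℕ}
    (hn : 2 * n = a * b + 1) :
    (∑ i ∈ Finset.range a, x ^ i) * (x * ∑ i ∈ Finset.range b, x ^ (a * i)) + 1 =
      (∑ i ∈ Finset.range n, x ^ i) * (x ^ n + 1) :=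
  calc
    _ = x * ∑ i ∈ Finset.range (a * b), x ^ i + 1 := by
      rw [mul_left_comm, geom_sum_mul_geom_sum_pow]
    _ = ∑ i ∈ Finset.range (n * 2), x ^ i := by rw [← geom_sum_succ, ← hn, mul_comm]
    _ = _ := by
      rw [← geom_sum_mul_geom_sum_pow, Finset.sum_range_succ, Finset.sum_range_one, mul_zero,
        mul_one, pow_zero, add_comm 1]

lemma geom_sum_mul_mul_geom_sum_pow_sub_one_of_charTwo [CommRing A] [CharP A 2] (x : A)
    {a b n : ℕ} (hn : 2 * n = a * b + 1) :
    (∑ i ∈ Finset.range a, x ^ i) * (x * ∑ i ∈ Finset.range b, x ^ (a * i)) - 1 =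
      (∑ i ∈ Finset.range n, x ^ i) * (x ^ n - 1) := by
  simpa only [CharTwo.sub_eq_add] using geom_sum_mul_mul_geom_sum_pow_add_one x hn

end GeomSum

section Exponents

variable {a b n : ℕ}

lemma coprime_of_mul_eq_mul_add_one {m : ℕ} (h : m * n = a * b + 1) : n.Coprime a := by
  have hbezout : (m : ℤ) * n + -b * a = 1 := by
    have hcast : (m : ℤ) * n = a * b + 1 := mod_cast h
    linear_combination hcast
  exact Nat.isCoprime_iff_coprime.mp ⟨m, -b, hbezout⟩

lemma injOn_mul_add_mod (hna : n.Coprime a) (hb : b ≤ n) (c : ℕ) :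
    Set.InjOn (fun i => (a * i + c) % n) (Finset.range b) := by
  intro i hi j hj hij
  have hmod : i ≡ j [MOD n] :=
    Nat.ModEq.cancel_left_of_coprime hna (Nat.ModEq.add_right_cancel' c hij)
  simp only [Finset.coe_range, Set.mem_Iio] at hi hj
  exact hmod.eq_of_lt_of_lt (hi.trans_le hb) (hj.trans_le hb)

end Exponents

section CyclicReduction

variable {K : Type*}

lemma support_sum_X_pow [Semiring K] [Nontrivial K] (s : Finset ℕ) :
    (∑ k ∈ s, (X : K[X]) ^ k).support = s := by
  ext k
  simp [coeff_X_pow]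

lemma X_pow_modByMonic_X_pow_sub_one [CommRing K] {n : ℕ} (hn : n ≠ 0) (m : ℕ) :
    (X ^ m : K[X]) %ₘ (X ^ n - 1) = X ^ (m % n) := by
  nontriviality K
  have hmonic : (X ^ n - 1 : K[X]).Monic := leadingCoeff_X_pow_sub_one (Nat.pos_of_ne_zero hn)
  have hdvd : (X ^ n - 1 : K[X]) ∣ X ^ m - X ^ (m % n) := by
    have hfactor : (X ^ m - X ^ (m % n) : K[X]) = X ^ (m % n) * ((X ^ n) ^ (m / n) - 1) := by
      rw [mul_sub_one, ← pow_mul, ← pow_add, Nat.mod_add_div]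
    rw [hfactor]
    exact (sub_one_dvd_pow_sub_one _ _).mul_left _
  rw [modByMonic_eq_of_dvd_sub hmonic hdvd, modByMonic_eq_self_iff hmonic, degree_X_pow,
    ← C_1, degree_X_pow_sub_C (Nat.pos_of_ne_zero hn)]
  exact_mod_cast Nat.mod_lt m (Nat.pos_of_ne_zero hn)

lemma card_support_sum_X_pow_modByMonic [CommRing K] [Nontrivial K] {ι : Type*} {n : ℕ}
    (hn : n ≠ 0) {s : Finset ι} {f : ι → ℕ} (hf : Set.InjOn (fun i => f i % n) s) :
    ((∑ i ∈ s, (X : K[X]) ^ f i) %ₘ (X ^ n - 1)).support.card = s.card := by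
  have hreduce : (∑ i ∈ s, (X : K[X]) ^ f i) %ₘ (X ^ n - 1) =
      ∑ k ∈ s.image fun i => f i % n, (X : K[X]) ^ k := by
    rw [Finset.sum_image hf, ← modByMonicHom_apply, map_sum]
    simp only [modByMonicHom_apply, X_pow_modByMonic_X_pow_sub_one hn]
  rw [hreduce, support_sum_X_pow, Finset.card_image_of_injOn hf]

end CyclicReduction

section CharTwo

variable {K : Type*} [CommRing K] [CharP K 2] {a b n : ℕ}

lemma mk_geom_sum_mul_mk_X_mul_geom_sum_pow (hn : 2 * n = a * b + 1) {q : K[X]}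
    (hq : q ∣ (∑ i ∈ Finset.range n, X ^ i) * (X ^ n - 1)) :
    AdjoinRoot.mk q (∑ i ∈ Finset.range a, X ^ i) *
      AdjoinRoot.mk q (X * ∑ i ∈ Finset.range b, X ^ (a * i)) = 1 := by
  rwa [← map_mul, ← map_one (AdjoinRoot.mk q), AdjoinRoot.mk_eq_mk,
    geom_sum_mul_mul_geom_sum_pow_sub_one_of_charTwo X hn]

theorem stmt_6_general {k : ℕ} (hn : 2 * n = a * b + 1) (hb : b ≤ n) (hk : a * k ≤ n) :
    AdjoinRoot.mk (X ^ n - 1 : K[X]) (∑ i ∈ Finset.range a, X ^ i) *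
        AdjoinRoot.mk (X ^ n - 1) (X * ∑ i ∈ Finset.range b, X ^ (a * i)) = 1 ∧
    AdjoinRoot.mk (∑ i ∈ Finset.range n, (X : K[X]) ^ i) (∑ i ∈ Finset.range a, X ^ i) *
        AdjoinRoot.mk (∑ i ∈ Finset.range n, X ^ i)
          (X * ∑ i ∈ Finset.range b, X ^ (a * i)) = 1 ∧
    ((X * ∑ i ∈ Finset.range b, (X : K[X]) ^ (a * i)) %ₘ (X ^ n - 1)).support.card = b ∧
    ∑ i ∈ Finset.range n, (X : K[X]) ^ i =
      (∑ i ∈ Finset.range a, X ^ i) * ∑ i ∈ Finset.range k, X ^ (a * i) +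
        ∑ i ∈ Finset.Ico (a * k) n, X ^ i := by
  have : Nontrivial K := CharP.nontrivial_of_char_ne_one (v := 2) (by decide)
  have hdistinct : Set.InjOn (fun i => (a * i + 1) % n) (Finset.range b) :=
    injOn_mul_add_mod (coprime_of_mul_eq_mul_add_one hn) hb 1
  refine ⟨mk_geom_sum_mul_mk_X_mul_geom_sum_pow hn (dvd_mul_left _ _),
    mk_geom_sum_mul_mk_X_mul_geom_sum_pow hn (dvd_mul_right _ _), ?_,
    geom_sum_eq_mul_geom_sum_pow_add_sum_Ico X hk⟩
  simpa only [Finset.mul_sum, ← pow_succ', Finset.card_range] using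
    card_support_sum_X_pow_modByMonic (K := K) (by lia) hdistinct

end CharTwo

section BinaryCyclicRing

variable {n : ℕ}

lemma wt_mkR (hn : n ≠ 0) (p : (ZMod 2)[X]) :
    wt (mkR n p) = (p %ₘ (X ^ n - 1)).support.card := by
  rw [wt, repP, dif_neg hn, mkR, AdjoinRoot.modByMonicHom_mk]

lemma mkR_X : mkR n X = xR n := AdjoinRoot.mk_X

lemma mkR_PmP (m : ℕ) : mkR n (PmP m) = PmR n m := by
  simp only [PmP, PmR, map_sum, map_pow, mkR_X]

lemma mkR_X_mul_sum_X_pow (s : Finset ℕ) (f : ℕ → ℕ) :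
    mkR n (X * ∑ i ∈ s, X ^ f i) = xR n * ∑ i ∈ s, xR n ^ f i := by
  simp only [map_mul, map_sum, map_pow, mkR_X]

end BinaryCyclicRing

/-- For odd `d > 0` and `n = (d²+1)/2` (i.e. `2n = d² + 1`):
(1) in `R = 𝔽₂[x]/(xⁿ−1)` one has `P_d(x)·(x·P_d(x^d)) = 1` where
`P_d(x^d) = Σ_{i<d} x^{d·i}`; the same identity holds in `𝔽₂[x]/(P_n(x))`; moreover
`x·P_d(x^d)` has weight exactly `d` in `R`.
(2) In `𝔽₂[x]` one has the exact identity
`P_n = P_d·(1 + x^d + ⋯ + x^{d((d−1)/2−1)}) + (x^{d(d−1)/2} + ⋯ + x^{n−1})`. -/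
theorem stmt_6 (d n : ℕ) (hd : Odd d) (hd0 : 0 < d) (hn : 2 * n = d ^ 2 + 1) :
    PmR n d * (xR n * ∑ i ∈ Finset.range d, xR n ^ (d * i)) = 1 ∧
    AdjoinRoot.mk (PmP n) (PmP d) *
        AdjoinRoot.mk (PmP n) (X * ∑ i ∈ Finset.range d, (X : (ZMod 2)[X]) ^ (d * i)) = 1 ∧
    wt (xR n * ∑ i ∈ Finset.range d, xR n ^ (d * i)) = d ∧
    PmP n = PmP d * (∑ i ∈ Finset.range ((d - 1) / 2), (X : (ZMod 2)[X]) ^ (d * i)) +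
        ∑ i ∈ Finset.Ico (d * ((d - 1) / 2)) n, (X : (ZMod 2)[X]) ^ i := by
  rw [← mkR_PmP, ← mkR_X_mul_sum_X_pow, wt_mkR (by lia)]
  exact stmt_6_general (sq d ▸ hn) (by nlinarith)
    (by nlinarith [Nat.div_mul_le_self (d - 1) 2, Nat.sub_le d 1])

end
end
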